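/- Let f : 𝖱^n → 𝖱 be continuous and bounded. Then there exist x, c ∈ 𝖱 such that f is identically equal to c on [x, ω₁)^n = {y ∈ 𝖱^n : y_i ≥ x for all i}. -/

import Mathlib

noncomputable section
open Set

/-- The first uncountable ordinal `ω₁`. -/
def Omega1 : Ordinal := Ordinal.omega 1

/-- The closed long ray `𝖱`: `ω₁ × [0,1)` with the lexicographic order. -/
def LongRay : Type 1 := {o : Ordinal // o < Omega1} ×ₗ (Set.Ico (0:ℝ) 1)

instance : LinearOrder LongRay :=
  inferInstanceAs (LinearOrder ({o : Ordinal // o < Omega1} ×ₗ (Set.Ico (0:ℝ) 1)))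

/-- `𝖱` carries the order topology. -/
instance : TopologicalSpace LongRay := Preorder.topology LongRay
instance : OrderTopology LongRay := ⟨rfl⟩

lemma omega1_pos : (0 : Ordinal) < Omega1 := Ordinal.omega_pos 1

/-- The point `0 = (0,0)` of the long ray. -/
def rayZero : LongRay := toLex (⟨0, omega1_pos⟩, ⟨0, by simp⟩)

/-- Identification of the countable ordinal `o` with the point `(o,0)` of the long ray
(junk value for `o ≥ ω₁`). -/
def ordR (o : Ordinal) : LongRay :=
  if h : o < Omega1 then toLex (⟨o, h⟩, ⟨0, by simp⟩) else rayZero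

/-- The `I`-diagonal at height `c` (only the values of `c` off `I` are relevant). -/
def Delta (n : ℕ) (I : Finset (Fin n)) (c : Fin n → LongRay) : Set (Fin n → LongRay) :=
  {x | (∀ i ∈ I, ∀ i' ∈ I, x i = x i') ∧ ∀ j ∉ I, x j = c j}

/-- `f` is `I`-cofinal if `f` restricted to `Δ_I = Δ_I(0)` is unbounded. -/
def ICofinal (n : ℕ) (f : (Fin n → LongRay) → LongRay) (I : Finset (Fin n)) : Prop :=
  ¬ BddAbove (f '' Delta n I (fun _ => rayZero))

/-- The cofinality class `𝔠(f) = {I : f is I-cofinal}`. -/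
def cofClass (n : ℕ) (f : (Fin n → LongRay) → LongRay) : Set (Finset (Fin n)) :=
  {I | ICofinal n f I}

/-- `M_I(c) = {x : x_i ≥ c for all i ∈ I}`. -/
def MSet (n : ℕ) (I : Finset (Fin n)) (c : LongRay) : Set (Fin n → LongRay) :=
  {x | ∀ i ∈ I, c ≤ x i}

/-- `E_I(b,d) = {x ∈ M_I(d) : x_j = b_j for all j ∉ I}`. -/
def ESet (n : ℕ) (I : Finset (Fin n)) (b : Fin n → LongRay) (d : LongRay) :
    Set (Fin n → LongRay) :=
  {x | (∀ i ∈ I, d ≤ x i) ∧ ∀ j ∉ I, x j = b j}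

namespace LongRay

open Filter Topology

/-- The ordinal coordinate of a point of the long ray. -/
def ord (x : LongRay) : {o : Ordinal // o < Omega1} := (ofLex x).1

/-- The coordinate in `[0,1)` of a point of the long ray. -/
def frac (x : LongRay) : Set.Ico (0 : ℝ) 1 := (ofLex x).2

/-- The point of the long ray with given coordinates. -/
def mk (o : {o : Ordinal // o < Omega1}) (t : Set.Ico (0 : ℝ) 1) : LongRay := toLex (o, t)

@[simp] lemma ord_mk (o t) : (mk o t).ord = o := rfl

@[simp] lemma frac_mk (o t) : (mk o t).frac = t := rfl

lemma lt_iff (x y : LongRay) : x < y ↔ x.ord < y.ord ∨ x.ord = y.ord ∧ x.frac < y.frac :=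
  Prod.Lex.lt_iff

lemma le_iff (x y : LongRay) : x ≤ y ↔ x.ord < y.ord ∨ x.ord = y.ord ∧ x.frac ≤ y.frac :=
  Prod.Lex.le_iff

lemma ord_mono {x y : LongRay} (h : x ≤ y) : x.ord ≤ y.ord := by
  rcases (le_iff x y).1 h with h | h
  exacts [h.le, h.1.le]

lemma succ_lt_omega1 {o : Ordinal} (h : o < Omega1) : Order.succ o < Omega1 :=
  (Cardinal.isSuccLimit_omega 1).succ_lt h

/-- Countable families in the long ray are bounded above. -/
lemma bddAbove_range_of_countable {ι : Type*} [Countable ι] (x : ι → LongRay) :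
    BddAbove (range x) := by
  have h : ⨆ i, ((x i).ord : Ordinal) < Omega1 :=
    Ordinal.iSup_lt_omega_one fun i => (x i).ord.2
  refine ⟨mk ⟨_, succ_lt_omega1 h⟩ ⟨0, by simp⟩, ?_⟩
  rintro _ ⟨i, rfl⟩
  refine (le_iff _ _).2 (Or.inl (Subtype.mk_lt_mk.2 ?_))
  exact Order.lt_succ_of_le (Ordinal.le_iSup (fun i => ((x i).ord : Ordinal)) i)

/-- Bounded above sets in the long ray have a least upper bound. -/
lemma exists_isLUB {S : Set LongRay} (hS : BddAbove S) : ∃ s, IsLUB S s := by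
  obtain ⟨u, hu, hmin⟩ := exists_minimalFor_of_wellFoundedLT (· ∈ upperBounds S) ord hS
  let T : Set ℝ := {t | ∃ h : t ∈ Set.Ico (0 : ℝ) 1, mk u.ord ⟨t, h⟩ ∈ upperBounds S}
  have hTu : (u.frac : ℝ) ∈ T := ⟨u.frac.2, hu⟩
  have hTb : BddBelow T := ⟨0, fun t ht => ht.1.1⟩
  have h0 : sInf T ∈ Set.Ico (0 : ℝ) 1 :=
    ⟨le_csInf ⟨_, hTu⟩ fun t ht => ht.1.1, (csInf_le hTb hTu).trans_lt u.frac.2.2⟩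
  refine ⟨mk u.ord ⟨sInf T, h0⟩, fun s hs => ?_, fun v hv => ?_⟩
  · rcases (ord_mono (hu hs)).lt_or_eq with h | h
    · exact (le_iff _ _).2 (Or.inl h)
    · refine (le_iff _ _).2 (Or.inr ⟨h, ?_⟩)
      refine Subtype.coe_le_coe.1 (le_csInf ⟨_, hTu⟩ fun t ⟨ht, htu⟩ => ?_)
      rcases (le_iff _ _).1 (htu hs) with h' | h'
      · exact absurd h' (by simp [h])
      · exact h'.2
  · have huv : u.ord ≤ v.ord := (le_total u.ord v.ord).elim id (hmin hv)
    rcases huv.lt_or_eq with h | h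
    · exact (le_iff _ _).2 (Or.inl h)
    · refine (le_iff _ _).2 (Or.inr ⟨h, ?_⟩)
      refine Subtype.coe_le_coe.1 (csInf_le hTb ⟨v.frac.2, ?_⟩)
      rw [h]
      exact hv

/-- Initial segments of the long ray have a countable order-dense subset. -/
lemma exists_countable_orderDense (z : LongRay) :
    ∃ D : Set LongRay, D.Countable ∧ ∀ a b, a < b → b ≤ z → ∃ d ∈ D, a < d ∧ d < b := by
  have hc : (Iic z.ord).Countable := by
    have h : (Iio (Order.succ (z.ord : Ordinal))).Countable := by
      rw [← Cardinal.le_aleph0_iff_set_countable, Cardinal.mk_Iio_ordinal, Cardinal.lift_le_aleph0,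
        ← Order.lt_succ_iff, Cardinal.succ_aleph0]
      exact Cardinal.lt_omega_iff_card_lt.1 (succ_lt_omega1 z.ord.2)
    refine (h.preimage (Subtype.val_injective (p := (· < Omega1)))).mono fun o ho => ?_
    exact Order.lt_succ_of_le (show (o : Ordinal) ≤ z.ord from ho)
  have hq : (((↑) : Set.Ico (0 : ℝ) 1 → ℝ) ⁻¹' range ((↑) : ℚ → ℝ)).Countable :=
    (countable_range _).preimage Subtype.val_injective
  refine ⟨(fun p => mk p.1 p.2) '' (Iic z.ord ×ˢ _), (hc.prod hq).image _, fun a b hab hbz => ?_⟩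
  have haz : a.ord ≤ z.ord := ord_mono (hab.le.trans hbz)
  rcases (lt_iff a b).1 hab with h | ⟨h, h'⟩
  · obtain ⟨q, hq1, hq2⟩ := exists_rat_btwn a.frac.2.2
    refine ⟨_, ⟨(a.ord, ⟨q, a.frac.2.1.trans hq1.le, hq2⟩), ⟨haz, q, rfl⟩, rfl⟩, ?_, ?_⟩
    · exact (lt_iff _ _).2 (Or.inr ⟨rfl, hq1⟩)
    · exact (lt_iff _ _).2 (Or.inl h)
  · obtain ⟨q, hq1, hq2⟩ := exists_rat_btwn (Subtype.coe_lt_coe.2 h')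
    refine ⟨_, ⟨(a.ord, ⟨q, a.frac.2.1.trans hq1.le, hq2.trans b.frac.2.2⟩),
      ⟨haz, q, rfl⟩, rfl⟩, ?_, ?_⟩
    · exact (lt_iff _ _).2 (Or.inr ⟨rfl, hq1⟩)
    · exact (lt_iff _ _).2 (Or.inr ⟨h, hq2⟩)

/-- Two closed sets meeting every corner `[x, ω₁)ⁿ` have a common point. -/
lemma inter_nonempty_of_isClosed {ι : Type*} [Finite ι] {A B : Set (ι → LongRay)}
    (hA : IsClosed A) (hB : IsClosed B)
    (hA' : ∀ x : LongRay, ∃ y ∈ A, ∀ i, x ≤ y i) (hB' : ∀ x : LongRay, ∃ y ∈ B, ∀ i, x ≤ y i) :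
    (A ∩ B).Nonempty := by
  choose a ha hxa using hA'
  choose b hb hxb using hB'
  have hnext : ∀ x : LongRay, ∃ x', x ≤ x' ∧ (∀ i, a x i ≤ x') ∧ ∀ i, b x i ≤ x' := by
    intro x
    obtain ⟨u, hu⟩ := bddAbove_range_of_countable (a x)
    obtain ⟨v, hv⟩ := bddAbove_range_of_countable (b x)
    exact ⟨x ⊔ (u ⊔ v), le_sup_left,
      fun i => (hu ⟨i, rfl⟩).trans (le_sup_left.trans le_sup_right),
      fun i => (hv ⟨i, rfl⟩).trans (le_sup_right.trans le_sup_right)⟩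
  choose g hg hga hgb using hnext
  let x : ℕ → LongRay := fun k => g^[k] rayZero
  have hsucc : ∀ k, x (k + 1) = g (x k) := fun k => Function.iterate_succ_apply' g k rayZero
  have hmono : Monotone x := monotone_nat_of_le_succ fun k => (hsucc k).symm ▸ hg (x k)
  obtain ⟨s, hs⟩ := exists_isLUB (bddAbove_range_of_countable x)
  have hlim : Tendsto x atTop (𝓝 s) := tendsto_atTop_isLUB hmono hs
  have hlim' : Tendsto (fun k => g (x k)) atTop (𝓝 s) := by
    simpa only [Function.comp_def, hsucc] using hlim.comp (tendsto_add_atTop_nat 1)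
  refine ⟨fun _ => s, hA.mem_of_tendsto (f := fun k => a (x k)) (b := atTop) ?_
    (Eventually.of_forall fun k => ha _), hB.mem_of_tendsto (f := fun k => b (x k)) (b := atTop) ?_
    (Eventually.of_forall fun k => hb _)⟩
  · exact tendsto_pi_nhds.2 fun i =>
      tendsto_of_tendsto_of_tendsto_of_le_of_le hlim hlim' (fun k => hxa _ i) fun k => hga _ i
  · exact tendsto_pi_nhds.2 fun i =>
      tendsto_of_tendsto_of_tendsto_of_le_of_le hlim hlim' (fun k => hxb _ i) fun k => hgb _ i

end LongRay

/-- a continuous bounded `f : 𝖱ⁿ → 𝖱` is constant on `[x, ω₁)ⁿ`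
for some `x`. -/
theorem bounded_constant_on_corner (n : ℕ) (f : (Fin n → LongRay) → LongRay)
    (hf : Continuous f) (hbd : BddAbove (Set.range f)) :
    ∃ x c : LongRay, ∀ y : Fin n → LongRay, (∀ i, x ≤ y i) → f y = c := by
  obtain ⟨z, hz⟩ := hbd
  obtain ⟨D, hD, hdense⟩ := LongRay.exists_countable_orderDense z
  have : Countable D := hD.to_subtype
  have key : ∀ p : D × D, ∃ x : LongRay, p.1 < p.2 →
      (∀ y : Fin n → LongRay, (∀ i, x ≤ y i) → (p.1 : LongRay) < f y) ∨
      (∀ y : Fin n → LongRay, (∀ i, x ≤ y i) → f y < p.2) := by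
    rintro ⟨p, q⟩
    by_contra! h
    obtain ⟨y, hyp, hyq⟩ := LongRay.inter_nonempty_of_isClosed
      (isClosed_le hf (continuous_const (y := (p : LongRay))))
      (isClosed_le (continuous_const (y := (q : LongRay))) hf)
      (fun x => let ⟨y, hy, hy'⟩ := (h x).2.1; ⟨y, hy', hy⟩)
      (fun x => let ⟨y, hy, hy'⟩ := (h x).2.2; ⟨y, hy', hy⟩)
    have hqp : (q : LongRay) ≤ p := le_trans (b := f y) hyq hyp
    exact (h z).1.not_ge hqp
  choose x hx using key
  obtain ⟨X, hX⟩ := LongRay.bddAbove_range_of_countable x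
  have hle : ∀ y y' : Fin n → LongRay, (∀ i, X ≤ y i) → (∀ i, X ≤ y' i) → f y' ≤ f y := by
    intro y y' hy hy'
    by_contra! hlt
    obtain ⟨q, hqD, hq, hq'⟩ := hdense _ _ hlt (hz ⟨y', rfl⟩)
    obtain ⟨p, hpD, hp, hpq⟩ := hdense _ _ hq (hq'.le.trans (hz ⟨y', rfl⟩))
    have hb : x (⟨p, hpD⟩, ⟨q, hqD⟩) ≤ X := hX ⟨_, rfl⟩
    rcases hx (⟨p, hpD⟩, ⟨q, hqD⟩) hpq with h | h
    · exact (h y fun i => hb.trans (hy i)).not_gt hp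
    · exact (h y' fun i => hb.trans (hy' i)).not_gt hq'
  exact ⟨X, f fun _ => X, fun y hy =>
    (hle _ _ (fun _ => le_rfl) hy).antisymm (hle _ _ hy fun _ => le_rfl)⟩
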